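/- Local Lipschitz continuity of the Gaussian projection: for every R ≥ 1 there exists L_G = L_G(R, n) such that for all probability measures μ₁, μ₂ ∈ P_R(R^n), d_g(Gμ₁, Gμ₂) ≤ L_G d_g(μ₁, μ₂). -/

import Mathlib

open MeasureTheory Matrix
open scoped BigOperators ENNReal

noncomputable section

namespace EnKF

/-- Points of `ℝ^n`, with Lebesgue measure as `volume`. -/
abbrev Vec (n : ℕ) := Fin n → ℝ

/-- Euclidean norm of a finitely indexed real vector. -/
def enorm {ι : Type*} [Fintype ι] (v : ι → ℝ) : ℝ := Real.sqrt (∑ i, v i ^ 2)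

/-- The weight function `g(v) = 1 + |v|²` on `ℝ^n`. -/
def gw {n : ℕ} (v : Vec n) : ℝ := 1 + ∑ i, v i ^ 2

/-- The weight function `g(u, y) = 1 + |u|² + |y|²` on `ℝ^d × ℝ^K`. -/
def gw2 {d K : ℕ} (p : Vec d × Vec K) : ℝ := 1 + (∑ i, p.1 i ^ 2) + (∑ j, p.2 j ^ 2)

/-- Weighted total-variation metric with weight `G`:
`d_G(μ₁, μ₂) = sup { |μ₁[f] − μ₂[f]| : f measurable, |f| ≤ G pointwise }`. -/
def dG {E : Type*} [MeasurableSpace E] (G : E → ℝ) (μ₁ μ₂ : Measure E) : ℝ :=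
  ⨆ f : {f : E → ℝ // Measurable f ∧ ∀ v, |f v| ≤ G v},
    |(∫ v, f.1 v ∂μ₁) - ∫ v, f.1 v ∂μ₂|

/-- Loewner order on symmetric matrices: `loe A B ↔ A ≼ B`. -/
def loe {ι : Type*} [Fintype ι] (A B : Matrix ι ι ℝ) : Prop := (B - A).PosSemidef

/-- Mean vector of a measure on `ℝ^n`. -/
def mean {n : ℕ} (μ : Measure (Vec n)) : Vec n := fun i => ∫ v, v i ∂μ

/-- Covariance matrix of a measure on `ℝ^n`. -/
def cov {n : ℕ} (μ : Measure (Vec n)) : Matrix (Fin n) (Fin n) ℝ :=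
  Matrix.of fun i j => ∫ v, (v i - mean μ i) * (v j - mean μ j) ∂μ

/-- Density of the Gaussian `N(m, S)` on `ℝ^n`. -/
def gaussDensity {n : ℕ} (m : Vec n) (S : Matrix (Fin n) (Fin n) ℝ) (x : Vec n) : ℝ :=
  (Real.sqrt ((2 * Real.pi) ^ n * S.det))⁻¹ *
    Real.exp (-(1 / 2) * ((x - m) ⬝ᵥ (S⁻¹ *ᵥ (x - m))))

/-- The (nondegenerate) Gaussian measure `N(m, S)` on `ℝ^n`. -/
def gauss {n : ℕ} (m : Vec n) (S : Matrix (Fin n) (Fin n) ℝ) : Measure (Vec n) :=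
  volume.withDensity fun x => ENNReal.ofReal (gaussDensity m S x)

/-- Gaussian projection `G` on `ℝ^n`: the Gaussian with the same mean and covariance. -/
def Gproj {n : ℕ} (μ : Measure (Vec n)) : Measure (Vec n) := gauss (mean μ) (cov μ)

variable {d K : ℕ}

/-- Mean of the first (state) marginal of a measure on `ℝ^d × ℝ^K`. -/
def meanU (π : Measure (Vec d × Vec K)) : Vec d := fun i => ∫ p, p.1 i ∂π

/-- Mean of the second (data) marginal of a measure on `ℝ^d × ℝ^K`. -/
def meanY (π : Measure (Vec d × Vec K)) : Vec K := fun j => ∫ p, p.2 j ∂π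

/-- Block `C^{uu}` of the covariance of a measure on `ℝ^d × ℝ^K`. -/
def covUU (π : Measure (Vec d × Vec K)) : Matrix (Fin d) (Fin d) ℝ :=
  Matrix.of fun i j => ∫ p, (p.1 i - meanU π i) * (p.1 j - meanU π j) ∂π

/-- Block `C^{uy}` of the covariance of a measure on `ℝ^d × ℝ^K`. -/
def covUY (π : Measure (Vec d × Vec K)) : Matrix (Fin d) (Fin K) ℝ :=
  Matrix.of fun i j => ∫ p, (p.1 i - meanU π i) * (p.2 j - meanY π j) ∂π

/-- Block `C^{yy}` of the covariance of a measure on `ℝ^d × ℝ^K`. -/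
def covYY (π : Measure (Vec d × Vec K)) : Matrix (Fin K) (Fin K) ℝ :=
  Matrix.of fun i j => ∫ p, (p.2 i - meanY π i) * (p.2 j - meanY π j) ∂π

/-- Full covariance matrix of a measure on `ℝ^d × ℝ^K`, in block form. -/
def covBlock (π : Measure (Vec d × Vec K)) : Matrix (Fin d ⊕ Fin K) (Fin d ⊕ Fin K) ℝ :=
  Matrix.fromBlocks (covUU π) (covUY π) (covUY π)ᵀ (covYY π)

/-- Density of a Gaussian on `ℝ^d × ℝ^K` with mean `(mu, my)` and covariance `S`. -/
def jointGaussDensity (mu : Vec d) (my : Vec K)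
    (S : Matrix (Fin d ⊕ Fin K) (Fin d ⊕ Fin K) ℝ) (p : Vec d × Vec K) : ℝ :=
  (Real.sqrt ((2 * Real.pi) ^ (d + K) * S.det))⁻¹ *
    Real.exp (-(1 / 2) *
      (Sum.elim (p.1 - mu) (p.2 - my) ⬝ᵥ (S⁻¹ *ᵥ Sum.elim (p.1 - mu) (p.2 - my))))

/-- Gaussian measure on `ℝ^d × ℝ^K` with mean `(mu, my)` and covariance `S`. -/
def jointGauss (mu : Vec d) (my : Vec K)
    (S : Matrix (Fin d ⊕ Fin K) (Fin d ⊕ Fin K) ℝ) : Measure (Vec d × Vec K) :=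
  volume.withDensity fun p => ENNReal.ofReal (jointGaussDensity mu my S p)

/-- Density of the Gaussian projection of a measure on `ℝ^d × ℝ^K`. -/
def gProjDensity2 (π : Measure (Vec d × Vec K)) : Vec d × Vec K → ℝ :=
  jointGaussDensity (meanU π) (meanY π) (covBlock π)

/-- Gaussian projection on `ℝ^d × ℝ^K`. -/
def Gproj2 (π : Measure (Vec d × Vec K)) : Measure (Vec d × Vec K) :=
  jointGauss (meanU π) (meanY π) (covBlock π)

/-- Prediction operator `P`: the law of `Ψ(V) + ξ`, `V ∼ μ` independent of `ξ ∼ N(0, Σ)`. -/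
def Pop (Psi : Vec d → Vec d) (Sig : Matrix (Fin d) (Fin d) ℝ)
    (μ : Measure (Vec d)) : Measure (Vec d) :=
  (μ.prod (gauss 0 Sig)).map fun p => Psi p.1 + p.2

/-- Lifting operator `Q`: the law of `(U, H(U) + η)`, `U ∼ μ` independent of `η ∼ N(0, Γ)`. -/
def Qop (H : Vec d → Vec K) (Gam : Matrix (Fin K) (Fin K) ℝ)
    (μ : Measure (Vec d)) : Measure (Vec d × Vec K) :=
  (μ.prod (gauss 0 Gam)).map fun p => (p.1, H p.1 + p.2)

/-- Lebesgue density of `Pμ`. -/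
def predDensity (Psi : Vec d → Vec d) (Sig : Matrix (Fin d) (Fin d) ℝ)
    (μ : Measure (Vec d)) (u : Vec d) : ℝ :=
  (Real.sqrt ((2 * Real.pi) ^ d * Sig.det))⁻¹ *
    ∫ v, Real.exp (-(1 / 2) * ((u - Psi v) ⬝ᵥ (Sig⁻¹ *ᵥ (u - Psi v)))) ∂μ

/-- Lebesgue density of `QPμ` on `ℝ^d × ℝ^K`. -/
def qpDensity (Psi : Vec d → Vec d) (Sig : Matrix (Fin d) (Fin d) ℝ)
    (H : Vec d → Vec K) (Gam : Matrix (Fin K) (Fin K) ℝ)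
    (μ : Measure (Vec d)) (p : Vec d × Vec K) : ℝ :=
  predDensity Psi Sig μ p.1 * gaussDensity (H p.1) Gam p.2

/-- Conditioning operator `B` applied to a (joint) density `f` and a datum `y†`:
the measure on `ℝ^d` with density `u ↦ f(u, y†) / ∫ f(U, y†) dU`. -/
def condM (f : Vec d × Vec K → ℝ) (ydag : Vec K) : Measure (Vec d) :=
  volume.withDensity fun u => ENNReal.ofReal (f (u, ydag) / ∫ U, f (U, ydag))

/-- Kalman transport operator `T`: the pushforward of `π` under
`(u, y) ↦ u + C^{uy}(π) C^{yy}(π)⁻¹ (y† − y)`. -/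
def Top (ydag : Vec K) (π : Measure (Vec d × Vec K)) : Measure (Vec d) :=
  π.map fun p => p.1 + covUY π *ᵥ ((covYY π)⁻¹ *ᵥ (ydag - p.2))

/-- Operator (spectral) norm of a real matrix. -/
def opNorm {ι : Type*} [Fintype ι] {κ : Type*} [Fintype κ] (A : Matrix ι κ ℝ) : ℝ :=
  ⨆ x : {x : κ → ℝ // ∑ i, x i ^ 2 ≤ 1}, enorm (A *ᵥ x.1)

/-- Frobenius norm of a real matrix. -/
def frobNorm {ι κ : Type*} [Fintype ι] [Fintype κ] (A : Matrix ι κ ℝ) : ℝ :=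
  Real.sqrt (∑ i, ∑ j, A i j ^ 2)

/-- Weighted norm `|x|_S = |S^{-1/2} x|`, i.e. `√(xᵀ S⁻¹ x)`. -/
def wnorm {n : ℕ} (S : Matrix (Fin n) (Fin n) ℝ) (x : Vec n) : ℝ :=
  Real.sqrt (x ⬝ᵥ (S⁻¹ *ᵥ x))

/-- The set `𝒫_R(ℝ^n)` of probability measures with `|M(μ)| ≤ R` and
`R⁻² I ≼ C(μ) ≼ R² I`. -/
def PR (n : ℕ) (R : ℝ) : Set (Measure (Vec n)) :=
  {μ | IsProbabilityMeasure μ ∧ enorm (mean μ) ≤ R ∧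
    loe ((R ^ 2)⁻¹ • 1) (cov μ) ∧ loe (cov μ) (R ^ 2 • 1)}

/-- The set `𝒫_R(ℝ^d × ℝ^K)`. -/
def PR2 (d K : ℕ) (R : ℝ) : Set (Measure (Vec d × Vec K)) :=
  {π | IsProbabilityMeasure π ∧ enorm (Sum.elim (meanU π) (meanY π)) ≤ R ∧
    loe ((R ^ 2)⁻¹ • 1) (covBlock π) ∧ loe (covBlock π) (R ^ 2 • 1)}

/-- Smallest eigenvalue of a symmetric matrix (Rayleigh quotient form). -/
def lambdaMin {ι : Type*} [Fintype ι] (A : Matrix ι ι ℝ) : ℝ :=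
  ⨅ x : {x : ι → ℝ // ∑ i, x i ^ 2 = 1}, x.1 ⬝ᵥ (A *ᵥ x.1)

/-- Kullback–Leibler divergence `KL(μ₁ ‖ μ₂) = ∫ (dμ₁/dμ₂) log (dμ₁/dμ₂) dμ₂`. -/
def kl {E : Type*} [MeasurableSpace E] (μ₁ μ₂ : Measure E) : ℝ :=
  ∫ v, ((μ₁.rnDeriv μ₂ v).toReal * Real.log (μ₁.rnDeriv μ₂ v).toReal) ∂μ₂


/-!
Write the density of `N(m, S)` as `exp ℓ`. On the parameter region `|m| ≤ r`, `a I ≼ S ≼ b I` the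
exponent `ℓ` is Lipschitz in `(m, S)` with a constant proportional to the weight `g`: the quadratic
form is handled by the resolvent identity for `S⁻¹`, and the determinant by
`log det A - log det B ≤ tr (B⁻¹ (A - B))`, which is `log t ≤ t - 1` applied to the eigenvalues of
`B^{-1/2} A B^{-1/2}`. All these densities lie below a single multiple of `exp (-g / (4 b))`, so
integrating the pointwise bound for the densities against `g` shows that `N(m, S)` is Lipschitz in
`(m, S)` for `d_g`.

In turn, mean and covariance are Lipschitz in the measure for `d_g`, since `v i` and `v i * v j`
are dominated by `g`; the second moments are finite because the covariance is nondegenerate.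
-/

theorem abs_exp_sub_exp_le {s t M : ℝ} (hs : Real.exp s ≤ M) (ht : Real.exp t ≤ M) :
    |Real.exp s - Real.exp t| ≤ M * |s - t| := by
  wlog hst : t ≤ s generalizing s t
  · rw [abs_sub_comm, abs_sub_comm s t]
    exact this ht hs (le_of_not_ge hst)
  rw [abs_of_nonneg (sub_nonneg.2 (Real.exp_le_exp.2 hst)), abs_of_nonneg (sub_nonneg.2 hst)]
  calc Real.exp s - Real.exp t = Real.exp s * (1 - Real.exp (t - s)) := by
        rw [mul_one_sub, ← Real.exp_add, add_sub_cancel]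
    _ ≤ Real.exp s * (s - t) := by
        refine mul_le_mul_of_nonneg_left ?_ (Real.exp_pos s).le
        linarith [Real.add_one_le_exp (t - s)]
    _ ≤ M * (s - t) := mul_le_mul_of_nonneg_right hs (sub_nonneg.2 hst)

section MatrixInequalities

open scoped Matrix.Norms.Operator

theorem two_mul_abs_apply_le_add_diag {ι : Type*} [Finite ι] {A : Matrix ι ι ℝ} (hA : A.PosSemidef)
    (i j : ι) : 2 * |A i j| ≤ A i i + A j j := by
  classical
  have := Fintype.ofFinite ι
  have hsymm : A j i = A i j := hA.isHermitian.apply i j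
  have hadd := hA.dotProduct_mulVec_nonneg (Pi.single i 1 + Pi.single j 1)
  have hsub := hA.dotProduct_mulVec_nonneg (Pi.single i 1 - Pi.single j 1)
  simp only [star_trivial, mulVec_add, mulVec_sub, mulVec_single, MulOpposite.op_one, one_smul,
    dotProduct_add, add_dotProduct, dotProduct_sub, sub_dotProduct, single_dotProduct, col_apply,
    one_mul, hsymm] at hadd hsub
  rw [← abs_two, ← abs_mul, abs_le]
  constructor <;> linarith

variable {ι : Type*} [Fintype ι] {A B : Matrix ι ι ℝ}

theorem norm_le_card_mul_of_abs_apply_le {r : ℝ} (hr : 0 ≤ r) (h : ∀ i j, |A i j| ≤ r) :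
    ‖A‖ ≤ Fintype.card ι * r := by
  lift r to NNReal using hr
  rw [linfty_opNorm_def, ← NNReal.coe_natCast, ← NNReal.coe_mul, NNReal.coe_le_coe]
  refine Finset.sup_le fun i _ => (Finset.sum_le_card_nsmul _ _ r fun j _ => h i j).trans_eq ?_
  rw [nsmul_eq_mul, Finset.card_univ]

theorem abs_apply_le_norm (A : Matrix ι ι ℝ) (i j : ι) : |A i j| ≤ ‖A‖ := by
  classical
  have h := (norm_le_pi_norm (A *ᵥ Pi.single j 1) i).trans (linfty_opNorm_mulVec A _)
  simpa [Pi.norm_single] using h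

theorem abs_trace_le_card_mul_norm (A : Matrix ι ι ℝ) : |A.trace| ≤ Fintype.card ι * ‖A‖ := by
  refine (Finset.abs_sum_le_sum_abs _ _).trans
    ((Finset.sum_le_card_nsmul _ _ _ fun i _ => abs_apply_le_norm A i i).trans_eq ?_)
  rw [nsmul_eq_mul, Finset.card_univ]

theorem abs_dotProduct_mulVec_le (A : Matrix ι ι ℝ) (u v : ι → ℝ) :
    |u ⬝ᵥ (A *ᵥ v)| ≤ Fintype.card ι * (‖A‖ * ‖u‖ * ‖v‖) := by
  have hterm : ∀ i ∈ Finset.univ, |u i * (A *ᵥ v) i| ≤ ‖A‖ * ‖u‖ * ‖v‖ := fun i _ =>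
    calc |u i * (A *ᵥ v) i| = ‖u i‖ * ‖(A *ᵥ v) i‖ := abs_mul _ _
      _ ≤ ‖u‖ * (‖A‖ * ‖v‖) := by
        gcongr
        exacts [norm_le_pi_norm u i, (norm_le_pi_norm _ i).trans (linfty_opNorm_mulVec A v)]
      _ = ‖A‖ * ‖u‖ * ‖v‖ := by ring
  refine (Finset.abs_sum_le_sum_abs _ _).trans
    ((Finset.sum_le_card_nsmul _ _ _ hterm).trans_eq ?_)
  rw [nsmul_eq_mul, Finset.card_univ]

theorem abs_quadForm_sub_quadForm_le (A B : Matrix ι ι ℝ) (u v : ι → ℝ) :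
    |u ⬝ᵥ (A *ᵥ u) - v ⬝ᵥ (B *ᵥ v)| ≤
      Fintype.card ι * (‖A - B‖ * ‖u‖ ^ 2 + ‖B‖ * (‖u‖ + ‖v‖) * ‖u - v‖) := by
  have expand : u ⬝ᵥ (A *ᵥ u) - v ⬝ᵥ (B *ᵥ v) =
      u ⬝ᵥ ((A - B) *ᵥ u) + (u - v) ⬝ᵥ (B *ᵥ u) + v ⬝ᵥ (B *ᵥ (u - v)) := by
    simp only [sub_mulVec, mulVec_sub, dotProduct_sub, sub_dotProduct]
    ring
  calc |u ⬝ᵥ (A *ᵥ u) - v ⬝ᵥ (B *ᵥ v)|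
      ≤ |u ⬝ᵥ ((A - B) *ᵥ u)| + |(u - v) ⬝ᵥ (B *ᵥ u)| + |v ⬝ᵥ (B *ᵥ (u - v))| :=
        expand ▸ abs_add_three _ _ _
    _ ≤ Fintype.card ι * (‖A - B‖ * ‖u‖ * ‖u‖) + Fintype.card ι * (‖B‖ * ‖u - v‖ * ‖u‖)
          + Fintype.card ι * (‖B‖ * ‖v‖ * ‖u - v‖) := by
        gcongr <;> exact abs_dotProduct_mulVec_le _ _ _
    _ = _ := by ring

theorem posDef_of_loe (hA : A.PosDef) (hAB : loe A B) : B.PosDef := by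
  simpa using hA.add_posSemidef hAB

variable [DecidableEq ι]

/- Both sides say that the block matrix `[[B, 1], [1, A⁻¹]]` is positive semidefinite, by the two
Schur complements. -/
theorem loe_inv_inv (hA : A.PosDef) (hAB : loe A B) : loe B⁻¹ A⁻¹ := by
  have hB := posDef_of_loe hA hAB
  have := hA.inv.isUnit.invertible
  have := hB.isUnit.invertible
  have hblock := (PosDef.fromBlocks₂₂ B 1 hA.inv).2
    (by simpa [nonsing_inv_nonsing_inv A hA.det_pos.ne'.isUnit, loe] using hAB)
  simpa [loe] using (PosDef.fromBlocks₁₁ 1 A⁻¹ hB).1 hblock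

theorem inv_smul_one {a : ℝ} (ha : a ≠ 0) : (a • (1 : Matrix ι ι ℝ))⁻¹ = a⁻¹ • 1 :=
  inv_eq_right_inv (by simp [smul_smul, ha])

theorem norm_le_of_loe_smul_one {b : ℝ} (hA : A.PosSemidef) (h : loe A (b • 1)) :
    ‖A‖ ≤ Fintype.card ι * b := by
  have hdiag : ∀ i, A i i ≤ b := fun i => by simpa [loe] using h.diag_nonneg (i := i)
  rcases isEmpty_or_nonempty ι with hι | ⟨⟨i⟩⟩
  · simp [Subsingleton.elim A 0]
  · exact norm_le_card_mul_of_abs_apply_le (hA.diag_nonneg.trans (hdiag i)) fun i j => by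
      linarith [two_mul_abs_apply_le_add_diag hA i j, hdiag i, hdiag j]

theorem norm_inv_le_of_smul_one_loe {a : ℝ} (ha : 0 < a) (h : loe (a • 1) A) :
    ‖A⁻¹‖ ≤ Fintype.card ι * a⁻¹ := by
  have hinv := loe_inv_inv (PosDef.one.smul ha) h
  rw [inv_smul_one ha.ne'] at hinv
  exact norm_le_of_loe_smul_one (posDef_of_loe (PosDef.one.smul ha) h).inv.posSemidef hinv

theorem inv_mul_dotProduct_self_le {b : ℝ} (hb : b ≠ 0) (hA : A.PosDef) (h : loe A (b • 1))
    (v : ι → ℝ) : b⁻¹ * (v ⬝ᵥ v) ≤ v ⬝ᵥ (A⁻¹ *ᵥ v) := by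
  have hinv := loe_inv_inv hA h
  rw [inv_smul_one hb] at hinv
  simpa [sub_mulVec, smul_mulVec, dotProduct_sub] using hinv.dotProduct_mulVec_nonneg v

theorem det_le_exp_trace_sub_card (hA : A.PosSemidef) :
    A.det ≤ Real.exp (A.trace - Fintype.card ι) := by
  have htrace : A.trace - Fintype.card ι = ∑ i, (hA.isHermitian.eigenvalues i - 1) := by
    simp [hA.isHermitian.trace_eq_sum_eigenvalues]
  rw [htrace, Real.exp_sum, hA.isHermitian.det_eq_prod_eigenvalues]
  refine Finset.prod_le_prod (fun i _ => hA.eigenvalues_nonneg i) fun i _ => ?_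
  simpa using Real.add_one_le_exp (hA.isHermitian.eigenvalues i - 1)

theorem neg_log_det_le_card_mul_norm_inv (hA : A.PosDef) :
    -Real.log A.det ≤ Fintype.card ι * ‖A⁻¹‖ := by
  have hdet : A⁻¹.det ≤ Real.exp A⁻¹.trace :=
    (det_le_exp_trace_sub_card hA.inv.posSemidef).trans (by simp)
  rw [← Real.log_inv, ← Ring.inverse_eq_inv', ← det_nonsing_inv]
  exact ((Real.log_le_iff_le_exp hA.inv.det_pos).2 hdet).trans
    ((le_abs_self _).trans (abs_trace_le_card_mul_norm _))

open scoped MatrixOrder in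
theorem log_det_sub_log_det_le_trace (hA : A.PosDef) (hB : B.PosDef) :
    Real.log A.det - Real.log B.det ≤ (B⁻¹ * (A - B)).trace := by
  set C := CFC.sqrt B⁻¹
  have hCC : C * C = B⁻¹ := CFC.sqrt_mul_sqrt_self B⁻¹ hB.inv.posSemidef.nonneg
  have hC : Cᴴ = C := (CFC.sqrt_nonneg B⁻¹).posSemidef.isHermitian
  have hCAC : (C * A * C).PosSemidef := by
    simpa only [hC] using hA.posSemidef.conjTranspose_mul_mul_same C
  have hdet : (C * A * C).det = A.det / B.det := by
    have hdetCC := congrArg det hCC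
    rw [det_mul, det_nonsing_inv, Ring.inverse_eq_inv'] at hdetCC
    rw [det_mul, det_mul, mul_right_comm, hdetCC, div_eq_inv_mul]
  have htrace : (C * A * C).trace - Fintype.card ι = (B⁻¹ * (A - B)).trace := by
    rw [mul_sub, nonsing_inv_mul B hB.det_pos.ne'.isUnit, trace_sub, trace_one, ← hCC,
      trace_mul_cycle]
  rw [← Real.log_div hA.det_pos.ne' hB.det_pos.ne', ← htrace, ← hdet]
  refine (Real.log_le_iff_le_exp ?_).2 (det_le_exp_trace_sub_card hCAC)
  exact hdet ▸ div_pos hA.det_pos hB.det_pos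

theorem abs_log_det_sub_log_det_le {c : ℝ} (hA : A.PosDef) (hB : B.PosDef) (hAc : ‖A⁻¹‖ ≤ c)
    (hBc : ‖B⁻¹‖ ≤ c) :
    |Real.log A.det - Real.log B.det| ≤ Fintype.card ι * (c * ‖A - B‖) := by
  have one_sided : ∀ {A B : Matrix ι ι ℝ}, A.PosDef → B.PosDef → ‖B⁻¹‖ ≤ c →
      Real.log A.det - Real.log B.det ≤ Fintype.card ι * (c * ‖A - B‖) := fun {A B} hA hB hBc =>
    calc Real.log A.det - Real.log B.det ≤ (B⁻¹ * (A - B)).trace :=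
          log_det_sub_log_det_le_trace hA hB
      _ ≤ Fintype.card ι * ‖B⁻¹ * (A - B)‖ :=
          (le_abs_self _).trans (abs_trace_le_card_mul_norm _)
      _ ≤ Fintype.card ι * (c * ‖A - B‖) := by
          gcongr
          exact (norm_mul_le _ _).trans (by gcongr)
  refine abs_sub_le_iff.2 ⟨one_sided hA hB hBc, ?_⟩
  rw [norm_sub_rev]
  exact one_sided hB hA hAc

theorem norm_inv_sub_inv_le (hA : IsUnit A) (hB : IsUnit B) :
    ‖A⁻¹ - B⁻¹‖ ≤ ‖A⁻¹‖ * ‖A - B‖ * ‖B⁻¹‖ := by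
  rw [Matrix.inv_sub_inv (by simp only [hA, hB]), norm_sub_rev A]
  exact norm_mul₃_le

end MatrixInequalities

section WeightedTotalVariation

variable {E : Type*} [MeasurableSpace E] {G : E → ℝ}

theorem dG_nonneg (G : E → ℝ) (μ₁ μ₂ : Measure E) : 0 ≤ dG G μ₁ μ₂ :=
  Real.iSup_nonneg fun _ => abs_nonneg _

theorem abs_integral_sub_le_dG {μ₁ μ₂ : Measure E} (h₁ : Integrable G μ₁) (h₂ : Integrable G μ₂)
    {f : E → ℝ} (hf : Measurable f) (hfG : ∀ v, |f v| ≤ G v) :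
    |∫ v, f v ∂μ₁ - ∫ v, f v ∂μ₂| ≤ dG G μ₁ μ₂ := by
  refine le_ciSup (f := fun f : {f : E → ℝ // Measurable f ∧ ∀ v, |f v| ≤ G v} =>
    |(∫ v, f.1 v ∂μ₁) - ∫ v, f.1 v ∂μ₂|) ?_ ⟨f, hf, hfG⟩
  refine ⟨∫ v, G v ∂μ₁ + ∫ v, G v ∂μ₂, ?_⟩
  rintro _ ⟨⟨k, _, hkG⟩, rfl⟩
  refine (abs_sub _ _).trans (add_le_add ?_ ?_)
  · exact norm_integral_le_of_norm_le (f := k) h₁ (ae_of_all _ hkG)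
  · exact norm_integral_le_of_norm_le (f := k) h₂ (ae_of_all _ hkG)

theorem integral_withDensity_ofReal {ν : Measure E} {p : E → ℝ} (hp : Measurable p)
    (hp0 : ∀ x, 0 ≤ p x) (f : E → ℝ) :
    ∫ x, f x ∂ν.withDensity (fun x => ENNReal.ofReal (p x)) = ∫ x, p x * f x ∂ν := by
  rw [integral_withDensity_eq_integral_toReal_smul hp.ennreal_ofReal
    (ae_of_all _ fun _ => ENNReal.ofReal_lt_top)]
  simp only [ENNReal.toReal_ofReal (hp0 _), smul_eq_mul]

theorem dG_withDensity_le {ν : Measure E} {p q : E → ℝ} (hG : ∀ x, 0 ≤ G x)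
    (hp : Measurable p) (hq : Measurable q) (hp0 : ∀ x, 0 ≤ p x) (hq0 : ∀ x, 0 ≤ q x)
    (hpG : Integrable (fun x => p x * G x) ν) (hqG : Integrable (fun x => q x * G x) ν) :
    dG G (ν.withDensity fun x => ENNReal.ofReal (p x))
      (ν.withDensity fun x => ENNReal.ofReal (q x)) ≤ ∫ x, |p x - q x| * G x ∂ν := by
  refine Real.iSup_le (fun ⟨f, hf, hfG⟩ => ?_)
    (integral_nonneg fun x => mul_nonneg (abs_nonneg _) (hG x))
  have integrable_mul : ∀ {r : E → ℝ}, Measurable r → (∀ x, 0 ≤ r x) →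
      Integrable (fun x => r x * G x) ν → Integrable (fun x => r x * f x) ν :=
    fun {r} hr hr0 hrG => hrG.mono' (hr.mul hf).aestronglyMeasurable <| ae_of_all _ fun x => by
      rw [Real.norm_eq_abs, abs_mul, abs_of_nonneg (hr0 x)]
      exact mul_le_mul_of_nonneg_left (hfG x) (hr0 x)
  have hbound : Integrable (fun x => |p x - q x| * G x) ν :=
    (hpG.sub hqG).abs.congr <| ae_of_all _ fun x => by
      simp only [Pi.sub_apply, ← sub_mul, abs_mul, abs_of_nonneg (hG x)]
  rw [integral_withDensity_ofReal hp hp0, integral_withDensity_ofReal hq hq0,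
    ← integral_sub (integrable_mul hp hp0 hpG) (integrable_mul hq hq0 hqG)]
  refine norm_integral_le_of_norm_le (f := fun x => p x * f x - q x * f x) hbound
    (ae_of_all _ fun x => ?_)
  rw [← sub_mul, Real.norm_eq_abs, abs_mul]
  exact mul_le_mul_of_nonneg_left (hfG x) (abs_nonneg _)

end WeightedTotalVariation

section QuadraticWeight

variable {n : ℕ}

theorem norm_le_enorm {ι : Type*} [Fintype ι] (v : ι → ℝ) : ‖v‖ ≤ enorm v :=
  (pi_norm_le_iff_of_nonneg (Real.sqrt_nonneg _)).2 fun i => Real.abs_le_sqrt <|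
    Finset.single_le_sum (f := fun i => v i ^ 2) (fun _ _ => sq_nonneg _) (Finset.mem_univ i)

theorem gw_eq_one_add_enorm_sq (v : Vec n) : gw v = 1 + enorm v ^ 2 := by
  rw [gw, enorm, Real.sq_sqrt (Finset.sum_nonneg fun i _ => sq_nonneg (v i))]

theorem one_add_norm_sq_le_gw (v : Vec n) : 1 + ‖v‖ ^ 2 ≤ gw v := by
  rw [gw_eq_one_add_enorm_sq]
  gcongr
  exact norm_le_enorm v

theorem gw_pos (v : Vec n) : 0 < gw v := by
  linarith [one_add_norm_sq_le_gw v, sq_nonneg ‖v‖]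

theorem abs_apply_le_gw (v : Vec n) (i : Fin n) : |v i| ≤ gw v := by
  have hvi : |v i| ≤ ‖v‖ := norm_le_pi_norm v i
  nlinarith [one_add_norm_sq_le_gw v]

theorem abs_mul_le_gw (v : Vec n) (i j : Fin n) : |v i * v j| ≤ gw v :=
  calc |v i * v j| = ‖v i‖ * ‖v j‖ := abs_mul _ _
    _ ≤ ‖v‖ * ‖v‖ := by gcongr <;> exact norm_le_pi_norm v _
    _ ≤ gw v := by linarith [one_add_norm_sq_le_gw v]

theorem norm_sub_sq_le_mul_gw {m : Vec n} {r : ℝ} (hm : ‖m‖ ≤ r) (v : Vec n) :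
    ‖v - m‖ ^ 2 ≤ (1 + r ^ 2) * gw v :=
  calc ‖v - m‖ ^ 2 ≤ (‖v‖ + r) ^ 2 := by
        gcongr
        exact (norm_sub_le v m).trans (by gcongr)
    _ ≤ (1 + r ^ 2) * (1 + ‖v‖ ^ 2) := by nlinarith [sq_nonneg (1 - r * ‖v‖)]
    _ ≤ (1 + r ^ 2) * gw v := by
        gcongr
        exact one_add_norm_sq_le_gw v

theorem one_le_one_add_sq_mul_gw (r : ℝ) (v : Vec n) : 1 ≤ (1 + r ^ 2) * gw v :=
  one_le_mul_of_one_le_of_one_le (le_add_of_nonneg_right (sq_nonneg r))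
    ((le_add_of_nonneg_right (sq_nonneg ‖v‖)).trans (one_add_norm_sq_le_gw v))

theorem norm_sub_le_mul_gw {m : Vec n} {r : ℝ} (hm : ‖m‖ ≤ r) (v : Vec n) :
    ‖v - m‖ ≤ (1 + r ^ 2) * gw v := by
  have hone := one_le_one_add_sq_mul_gw r v
  exact (pow_le_pow_iff_left₀ (norm_nonneg _) (by positivity) two_ne_zero).1
    ((norm_sub_sq_le_mul_gw hm v).trans (le_self_pow₀ hone two_ne_zero))

theorem gw_le_of_enorm_le {m : Vec n} {r : ℝ} (hm : enorm m ≤ r) (v : Vec n) :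
    gw v ≤ 1 + 2 * r ^ 2 + 2 * ((v - m) ⬝ᵥ (v - m)) := by
  have hsum : ∑ i, v i ^ 2 ≤ 2 * ∑ i, m i ^ 2 + 2 * ((v - m) ⬝ᵥ (v - m)) := by
    simp only [dotProduct, Finset.mul_sum, ← Finset.sum_add_distrib, Pi.sub_apply]
    exact Finset.sum_le_sum fun i _ => by nlinarith [sq_nonneg (v i - 2 * m i)]
  have hm2 : ∑ i, m i ^ 2 ≤ r ^ 2 := (Real.sqrt_le_left ((Real.sqrt_nonneg _).trans hm)).1 hm
  rw [gw]
  linarith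

theorem measurable_gw : Measurable (gw : Vec n → ℝ) := by
  unfold gw
  fun_prop

theorem integrable_exp_neg_mul_gw {c : ℝ} (hc : 0 < c) :
    Integrable fun v : Vec n => Real.exp (-c * gw v) := by
  have h := Integrable.fintype_prod (ι := Fin n) (f := fun _ t => Real.exp (-c * t ^ 2))
    (μ := fun _ => volume) fun _ => integrable_exp_neg_mul_sq hc
  simp only [← Real.exp_sum, ← Finset.mul_sum] at h
  simp only [gw, mul_add, Real.exp_add]
  exact h.const_mul _

theorem integrable_gw_pow_mul_exp_neg_mul_gw (k : ℕ) {c : ℝ} (hc : 0 < c) :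
    Integrable fun v : Vec n => gw v ^ k * Real.exp (-c * gw v) := by
  have hc2 : 0 < c / 2 := half_pos hc
  refine ((integrable_exp_neg_mul_gw hc2).const_mul (k.factorial / (c / 2) ^ k)).mono' ?_
    (ae_of_all _ fun v => ?_)
  · have := measurable_gw (n := n)
    exact Measurable.aestronglyMeasurable (by fun_prop)
  · have hg := (gw_pos v).le
    have hpow : gw v ^ k ≤ k.factorial / (c / 2) ^ k * Real.exp (c / 2 * gw v) := by
      have hexp := Real.pow_div_factorial_le_exp (c / 2 * gw v) (by positivity) k
      rw [div_le_iff₀ (by positivity), mul_pow] at hexp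
      rw [div_mul_eq_mul_div, le_div_iff₀ (by positivity)]
      linarith
    rw [Real.norm_of_nonneg (by positivity)]
    calc gw v ^ k * Real.exp (-c * gw v)
        ≤ k.factorial / (c / 2) ^ k * Real.exp (c / 2 * gw v) * Real.exp (-c * gw v) := by gcongr
      _ = k.factorial / (c / 2) ^ k * Real.exp (-(c / 2) * gw v) := by
        rw [mul_assoc, ← Real.exp_add]
        ring_nf

end QuadraticWeight

section Moments

variable {n : ℕ}

/- A divergent second moment would make the Bochner integral defining `cov μ i i` equal to `0`. -/
theorem integrable_gw_of_cov_apply_self_ne_zero {μ : Measure (Vec n)} [IsFiniteMeasure μ]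
    (h : ∀ i, cov μ i i ≠ 0) : Integrable gw μ := by
  refine (integrable_const 1).add (integrable_finsetSum _ fun i _ => ?_)
  have hvar : ProbabilityTheory.variance (fun v : Vec n => v i) μ ≠ 0 := by
    rw [← ProbabilityTheory.covariance_self (measurable_pi_apply i).aemeasurable]
    exact h i
  exact (ProbabilityTheory.memLp_two_of_variance_ne_zero
    (measurable_pi_apply i).aestronglyMeasurable hvar).integrable_sq

theorem cov_apply_eq {μ : Measure (Vec n)} [IsProbabilityMeasure μ] (hμ : Integrable gw μ)
    (i j : Fin n) : cov μ i j = ∫ v, v i * v j ∂μ - mean μ i * mean μ j := by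
  have hmem : ∀ i, MemLp (fun v : Vec n => v i) 2 μ := fun i => by
    rw [memLp_two_iff_integrable_sq (measurable_pi_apply i).aestronglyMeasurable]
    refine hμ.mono' (Measurable.aestronglyMeasurable (by fun_prop)) (ae_of_all _ fun v => ?_)
    simpa only [sq, Real.norm_eq_abs] using abs_mul_le_gw v i i
  exact ProbabilityTheory.covariance_eq_sub (hmem i) (hmem j)

variable {μ₁ μ₂ : Measure (Vec n)}

theorem norm_mean_sub_mean_le_dG (h₁ : Integrable gw μ₁) (h₂ : Integrable gw μ₂) :
    ‖mean μ₁ - mean μ₂‖ ≤ dG gw μ₁ μ₂ :=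
  (pi_norm_le_iff_of_nonneg (dG_nonneg _ _ _)).2 fun i =>
    abs_integral_sub_le_dG h₁ h₂ (measurable_pi_apply i) fun v => abs_apply_le_gw v i

theorem abs_cov_sub_cov_le_dG [IsProbabilityMeasure μ₁] [IsProbabilityMeasure μ₂]
    (h₁ : Integrable gw μ₁) (h₂ : Integrable gw μ₂) (i j : Fin n) :
    |cov μ₁ i j - cov μ₂ i j| ≤ (1 + ‖mean μ₁‖ + ‖mean μ₂‖) * dG gw μ₁ μ₂ := by
  have hmean : ∀ i, |mean μ₁ i - mean μ₂ i| ≤ dG gw μ₁ μ₂ := fun i =>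
    (norm_le_pi_norm (mean μ₁ - mean μ₂) i).trans (norm_mean_sub_mean_le_dG h₁ h₂)
  have hsecond : |∫ v, v i * v j ∂μ₁ - ∫ v, v i * v j ∂μ₂| ≤ dG gw μ₁ μ₂ :=
    abs_integral_sub_le_dG h₁ h₂ (by fun_prop) fun v => abs_mul_le_gw v i j
  calc |cov μ₁ i j - cov μ₂ i j|
      = |(∫ v, v i * v j ∂μ₁ - ∫ v, v i * v j ∂μ₂) + -(mean μ₁ i * (mean μ₁ j - mean μ₂ j))
          + -(mean μ₂ j * (mean μ₁ i - mean μ₂ i))| := by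
        rw [cov_apply_eq h₁, cov_apply_eq h₂]
        ring_nf
    _ ≤ dG gw μ₁ μ₂ + ‖mean μ₁‖ * dG gw μ₁ μ₂ + ‖mean μ₂‖ * dG gw μ₁ μ₂ := by
        refine (abs_add_three _ _ _).trans ?_
        rw [abs_neg, abs_neg, abs_mul, abs_mul]
        gcongr
        exacts [norm_le_pi_norm (mean μ₁) i, hmean j, norm_le_pi_norm (mean μ₂) j, hmean i]
    _ = (1 + ‖mean μ₁‖ + ‖mean μ₂‖) * dG gw μ₁ μ₂ := by ring

open scoped Matrix.Norms.Operator in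
theorem norm_mean_sub_add_norm_cov_sub_le_dG [IsProbabilityMeasure μ₁] [IsProbabilityMeasure μ₂]
    (h₁ : Integrable gw μ₁) (h₂ : Integrable gw μ₂) :
    ‖mean μ₁ - mean μ₂‖ + ‖cov μ₁ - cov μ₂‖ ≤
      (1 + n * (1 + ‖mean μ₁‖ + ‖mean μ₂‖)) * dG gw μ₁ μ₂ := by
  have hcov : ‖cov μ₁ - cov μ₂‖ ≤ n * ((1 + ‖mean μ₁‖ + ‖mean μ₂‖) * dG gw μ₁ μ₂) := by
    have hdG := dG_nonneg gw μ₁ μ₂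
    simpa only [Fintype.card_fin] using norm_le_card_mul_of_abs_apply_le
      (A := cov μ₁ - cov μ₂) (by positivity) (abs_cov_sub_cov_le_dG h₁ h₂)
  linarith [norm_mean_sub_mean_le_dG h₁ h₂]

end Moments

section Gaussian

open scoped Matrix.Norms.Operator

variable {n : ℕ} {r a b : ℝ} {m m₁ m₂ : Vec n} {S S₁ S₂ : Matrix (Fin n) (Fin n) ℝ}

/-- The parameters `|m| ≤ r`, `a I ≼ S ≼ b I`, a region on which all Gaussian bounds are uniform. -/
structure GaussParam (r a b : ℝ) (m : Vec n) (S : Matrix (Fin n) (Fin n) ℝ) : Prop where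
  enorm_le : enorm m ≤ r
  smul_one_loe : loe (a • 1) S
  loe_smul_one : loe S (b • 1)

/-- The logarithm of the density of `N(m, S)`, for positive definite `S`; unlike the density, its
dependence on `(m, S)` splits into a determinant and a quadratic form. -/
def logGaussDensity (m : Vec n) (S : Matrix (Fin n) (Fin n) ℝ) (x : Vec n) : ℝ :=
  -(1 / 2) * (n * Real.log (2 * Real.pi) + Real.log S.det + (x - m) ⬝ᵥ (S⁻¹ *ᵥ (x - m)))

theorem gaussDensity_eq_exp (hS : S.PosDef) (x : Vec n) :
    gaussDensity m S x = Real.exp (logGaussDensity m S x) := by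
  have hpi : 0 < (2 * Real.pi) ^ n := by positivity
  have hsqrt : (Real.sqrt ((2 * Real.pi) ^ n * S.det))⁻¹ =
      Real.exp (-(1 / 2) * (n * Real.log (2 * Real.pi) + Real.log S.det)) := by
    rw [← Real.log_pow, ← Real.log_mul hpi.ne' hS.det_pos.ne', neg_mul, Real.exp_neg,
      one_div_mul_eq_div, Real.exp_half, Real.exp_log (mul_pos hpi hS.det_pos)]
  rw [gaussDensity, hsqrt, ← Real.exp_add, logGaussDensity]
  ring_nf

theorem measurable_gaussDensity (m : Vec n) (S : Matrix (Fin n) (Fin n) ℝ) :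
    Measurable (gaussDensity m S) := by
  unfold gaussDensity
  simp only [dotProduct, mulVec]
  fun_prop

theorem gaussDensity_nonneg (m : Vec n) (S : Matrix (Fin n) (Fin n) ℝ) (x : Vec n) :
    0 ≤ gaussDensity m S x := by
  unfold gaussDensity
  positivity

/-- A common envelope of the densities of `N(m, S)` over `GaussParam r a b m S`. It decays in the
weight `gw x` rather than in `|x|²`, which only changes the constant. -/
def gaussEnvelope (n : ℕ) (r a b : ℝ) (x : Vec n) : ℝ :=
  Real.exp (n * (n * a⁻¹) / 2 + b⁻¹ * (1 + 2 * r ^ 2) / 4 + -(b⁻¹ / 4) * gw x)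

theorem integrable_gw_pow_mul_gaussEnvelope (n k : ℕ) (r a : ℝ) (hb : 0 < b) :
    Integrable fun x : Vec n => gw x ^ k * gaussEnvelope n r a b x := by
  simp only [gaussEnvelope, Real.exp_add _ (-(b⁻¹ / 4) * _), mul_left_comm (gw _ ^ k)]
  exact (integrable_gw_pow_mul_exp_neg_mul_gw k (by positivity)).const_mul _

namespace GaussParam

theorem posDef (h : GaussParam r a b m S) (ha : 0 < a) : S.PosDef :=
  posDef_of_loe (PosDef.one.smul ha) h.smul_one_loe

theorem norm_inv_le (h : GaussParam r a b m S) (ha : 0 < a) : ‖S⁻¹‖ ≤ n * a⁻¹ := by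
  simpa using norm_inv_le_of_smul_one_loe ha h.smul_one_loe

theorem logGaussDensity_le (h : GaussParam r a b m S) (ha : 0 < a) (hb : 0 < b) (x : Vec n) :
    logGaussDensity m S x ≤
      n * (n * a⁻¹) / 2 + b⁻¹ * (1 + 2 * r ^ 2) / 4 + -(b⁻¹ / 4) * gw x := by
  have hpi : 0 ≤ n * Real.log (2 * Real.pi) :=
    mul_nonneg n.cast_nonneg (Real.log_nonneg (by linarith [Real.two_le_pi]))
  have hdet : -Real.log S.det ≤ n * (n * a⁻¹) :=
    calc -Real.log S.det ≤ n * ‖S⁻¹‖ := by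
          simpa using neg_log_det_le_card_mul_norm_inv (h.posDef ha)
      _ ≤ n * (n * a⁻¹) := by
          gcongr
          exact h.norm_inv_le ha
  have hquad := inv_mul_dotProduct_self_le hb.ne' (h.posDef ha) h.loe_smul_one (x - m)
  have hgw := mul_le_mul_of_nonneg_left (gw_le_of_enorm_le h.enorm_le x) (inv_nonneg.2 hb.le)
  unfold logGaussDensity
  linarith

theorem abs_quadForm_inv_sub_le (h₁ : GaussParam r a b m₁ S₁) (h₂ : GaussParam r a b m₂ S₂)
    (ha : 0 < a) (x : Vec n) :
    |(x - m₁) ⬝ᵥ (S₁⁻¹ *ᵥ (x - m₁)) - (x - m₂) ⬝ᵥ (S₂⁻¹ *ᵥ (x - m₂))| ≤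
      n * ((n * a⁻¹) ^ 2 * ‖S₁ - S₂‖ + 2 * (n * a⁻¹) * ‖m₁ - m₂‖) * ((1 + r ^ 2) * gw x) := by
  set c : ℝ := n * a⁻¹
  set M : ℝ := (1 + r ^ 2) * gw x
  have hinv : ‖S₁⁻¹ - S₂⁻¹‖ ≤ c * ‖S₁ - S₂‖ * c := by
    refine (norm_inv_sub_inv_le (h₁.posDef ha).isUnit (h₂.posDef ha).isUnit).trans ?_
    gcongr
    exacts [h₁.norm_inv_le ha, h₂.norm_inv_le ha]
  have hm₁ := (norm_le_enorm m₁).trans h₁.enorm_le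
  have hm₂ := (norm_le_enorm m₂).trans h₂.enorm_le
  calc |(x - m₁) ⬝ᵥ (S₁⁻¹ *ᵥ (x - m₁)) - (x - m₂) ⬝ᵥ (S₂⁻¹ *ᵥ (x - m₂))|
      ≤ n * (‖S₁⁻¹ - S₂⁻¹‖ * ‖x - m₁‖ ^ 2 +
          ‖S₂⁻¹‖ * (‖x - m₁‖ + ‖x - m₂‖) * ‖m₁ - m₂‖) := by
        simpa only [Fintype.card_fin, sub_sub_sub_cancel_left, norm_sub_rev m₂] using
          abs_quadForm_sub_quadForm_le S₁⁻¹ S₂⁻¹ (x - m₁) (x - m₂)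
    _ ≤ n * (c * ‖S₁ - S₂‖ * c * M + c * (M + M) * ‖m₁ - m₂‖) := by
        gcongr
        exacts [norm_sub_sq_le_mul_gw hm₁ x, h₂.norm_inv_le ha, norm_sub_le_mul_gw hm₁ x,
          norm_sub_le_mul_gw hm₂ x]
    _ = n * (c ^ 2 * ‖S₁ - S₂‖ + 2 * c * ‖m₁ - m₂‖) * M := by ring

theorem abs_logGaussDensity_sub_le (h₁ : GaussParam r a b m₁ S₁) (h₂ : GaussParam r a b m₂ S₂)
    (ha : 0 < a) (x : Vec n) :
    |logGaussDensity m₁ S₁ x - logGaussDensity m₂ S₂ x| ≤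
      n * (n * a⁻¹ + (n * a⁻¹) ^ 2) * (1 + r ^ 2) * (‖m₁ - m₂‖ + ‖S₁ - S₂‖) * gw x := by
  have hdet := abs_log_det_sub_log_det_le (h₁.posDef ha) (h₂.posDef ha) (h₁.norm_inv_le ha)
    (h₂.norm_inv_le ha)
  have hquad := h₁.abs_quadForm_inv_sub_le h₂ ha x
  rw [Fintype.card_fin] at hdet
  set c : ℝ := n * a⁻¹
  set M : ℝ := (1 + r ^ 2) * gw x with hM
  have : 0 ≤ c := by positivity
  have hM1 : 1 ≤ M := one_le_one_add_sq_mul_gw r x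
  have hsplit : logGaussDensity m₁ S₁ x - logGaussDensity m₂ S₂ x =
      -(((Real.log S₁.det - Real.log S₂.det) + ((x - m₁) ⬝ᵥ (S₁⁻¹ *ᵥ (x - m₁)) -
        (x - m₂) ⬝ᵥ (S₂⁻¹ *ᵥ (x - m₂)))) / 2) := by
    unfold logGaussDensity
    ring
  rw [hsplit, abs_neg, abs_div, abs_two]
  calc _ ≤ (n * (c * ‖S₁ - S₂‖) + n * (c ^ 2 * ‖S₁ - S₂‖ + 2 * c * ‖m₁ - m₂‖) * M) / 2 := by
        gcongr
        exact (abs_add_le _ _).trans (add_le_add hdet hquad)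
    _ ≤ n * (c + c ^ 2) * M * (‖m₁ - m₂‖ + ‖S₁ - S₂‖) := by
        have : n * (c * ‖S₁ - S₂‖) * 1 ≤ n * (c * ‖S₁ - S₂‖) * M := by gcongr
        have : 0 ≤ n * c * M * ‖S₁ - S₂‖ := by positivity
        have : 0 ≤ n * c ^ 2 * M * ‖S₁ - S₂‖ := by positivity
        have : 0 ≤ n * c ^ 2 * M * ‖m₁ - m₂‖ := by positivity
        linarith
    _ = _ := by rw [hM]; ring

theorem gaussDensity_le (h : GaussParam r a b m S) (ha : 0 < a) (hb : 0 < b) (x : Vec n) :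
    gaussDensity m S x ≤ gaussEnvelope n r a b x := by
  rw [gaussDensity_eq_exp (h.posDef ha)]
  exact Real.exp_le_exp.2 (h.logGaussDensity_le ha hb x)

theorem abs_gaussDensity_sub_le (h₁ : GaussParam r a b m₁ S₁) (h₂ : GaussParam r a b m₂ S₂)
    (ha : 0 < a) (hb : 0 < b) (x : Vec n) :
    |gaussDensity m₁ S₁ x - gaussDensity m₂ S₂ x| ≤
      n * (n * a⁻¹ + (n * a⁻¹) ^ 2) * (1 + r ^ 2) * (‖m₁ - m₂‖ + ‖S₁ - S₂‖) *
        (gw x * gaussEnvelope n r a b x) := by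
  have hle₁ := h₁.gaussDensity_le ha hb x
  have hle₂ := h₂.gaussDensity_le ha hb x
  rw [gaussDensity_eq_exp (h₁.posDef ha)] at hle₁ ⊢
  rw [gaussDensity_eq_exp (h₂.posDef ha)] at hle₂ ⊢
  refine (abs_exp_sub_exp_le hle₁ hle₂).trans ?_
  rw [← mul_assoc, mul_comm (gaussEnvelope n r a b x)]
  exact mul_le_mul_of_nonneg_right (h₁.abs_logGaussDensity_sub_le h₂ ha x) (Real.exp_pos _).le

theorem integrable_gaussDensity_mul_gw (h : GaussParam r a b m S) (ha : 0 < a) (hb : 0 < b) :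
    Integrable fun x => gaussDensity m S x * gw x := by
  refine (integrable_gw_pow_mul_gaussEnvelope n 1 r a hb).mono'
    ((measurable_gaussDensity m S).mul measurable_gw).aestronglyMeasurable
    (ae_of_all _ fun x => ?_)
  rw [Real.norm_of_nonneg (mul_nonneg (gaussDensity_nonneg m S x) (gw_pos x).le), pow_one, mul_comm]
  exact mul_le_mul_of_nonneg_left (h.gaussDensity_le ha hb x) (gw_pos x).le

end GaussParam

theorem exists_dG_gauss_le (n : ℕ) (r : ℝ) (ha : 0 < a) (hb : 0 < b) :
    ∃ C : ℝ, 0 ≤ C ∧ ∀ (m₁ m₂ : Vec n) (S₁ S₂ : Matrix (Fin n) (Fin n) ℝ),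
      GaussParam r a b m₁ S₁ → GaussParam r a b m₂ S₂ →
        dG gw (gauss m₁ S₁) (gauss m₂ S₂) ≤ C * (‖m₁ - m₂‖ + ‖S₁ - S₂‖) := by
  set B : ℝ := n * (n * a⁻¹ + (n * a⁻¹) ^ 2) * (1 + r ^ 2)
  set I : ℝ := ∫ x : Vec n, gw x ^ 2 * gaussEnvelope n r a b x
  have hI : 0 ≤ I := integral_nonneg fun x => mul_nonneg (sq_nonneg _) (Real.exp_pos _).le
  refine ⟨B * I, by positivity, fun m₁ m₂ S₁ S₂ h₁ h₂ => ?_⟩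
  set δ := ‖m₁ - m₂‖ + ‖S₁ - S₂‖
  have hbound : ∀ x, |gaussDensity m₁ S₁ x - gaussDensity m₂ S₂ x| * gw x ≤
      B * δ * (gw x ^ 2 * gaussEnvelope n r a b x) := fun x =>
    (mul_le_mul_of_nonneg_right (h₁.abs_gaussDensity_sub_le h₂ ha hb x) (gw_pos x).le).trans_eq
      (by ring)
  calc dG gw (gauss m₁ S₁) (gauss m₂ S₂)
      ≤ ∫ x, |gaussDensity m₁ S₁ x - gaussDensity m₂ S₂ x| * gw x :=
        dG_withDensity_le (fun x => (gw_pos x).le) (measurable_gaussDensity m₁ S₁)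
          (measurable_gaussDensity m₂ S₂) (gaussDensity_nonneg m₁ S₁) (gaussDensity_nonneg m₂ S₂)
          (h₁.integrable_gaussDensity_mul_gw ha hb) (h₂.integrable_gaussDensity_mul_gw ha hb)
    _ ≤ ∫ x, B * δ * (gw x ^ 2 * gaussEnvelope n r a b x) :=
        integral_mono_of_nonneg (ae_of_all _ fun x => mul_nonneg (abs_nonneg _) (gw_pos x).le)
          ((integrable_gw_pow_mul_gaussEnvelope n 2 r a hb).const_mul _) (ae_of_all _ hbound)
    _ = B * I * δ := by rw [integral_const_mul]; ring

end Gaussian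

theorem gaussParam_of_mem_PR {n : ℕ} {R : ℝ} {μ : Measure (Vec n)} (hμ : μ ∈ PR n R) :
    GaussParam R (R ^ 2)⁻¹ (R ^ 2) (mean μ) (cov μ) :=
  ⟨hμ.2.1, hμ.2.2.1, hμ.2.2.2⟩

theorem integrable_gw_of_mem_PR {n : ℕ} {R : ℝ} (hR : R ≠ 0) {μ : Measure (Vec n)}
    (hμ : μ ∈ PR n R) : Integrable gw μ := by
  have := hμ.1
  exact integrable_gw_of_cov_apply_self_ne_zero fun i =>
    ((gaussParam_of_mem_PR hμ).posDef (by positivity)).diag_pos.ne'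

/-- **Local Lipschitz continuity of the Gaussian projection** (Lemma A.11). -/
theorem Gproj_locally_lipschitz
    (n : ℕ) (R : ℝ) (hR : 1 ≤ R) :
    ∃ L : ℝ, 0 < L ∧
      ∀ μ₁ μ₂ : Measure (Vec n), μ₁ ∈ PR n R → μ₂ ∈ PR n R →
        dG gw (Gproj μ₁) (Gproj μ₂) ≤ L * dG gw μ₁ μ₂ := by
  have hR0 : 0 < R := zero_lt_one.trans_le hR
  obtain ⟨C, hC, hgauss⟩ :=
    exists_dG_gauss_le n R (inv_pos.2 (pow_pos hR0 2)) (pow_pos hR0 2)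
  refine ⟨C * (1 + n * (1 + R + R)) + 1, by positivity, fun μ₁ μ₂ hμ₁ hμ₂ => ?_⟩
  have := hμ₁.1
  have := hμ₂.1
  have hdG := dG_nonneg gw μ₁ μ₂
  calc dG gw (Gproj μ₁) (Gproj μ₂)
      ≤ C * _ := hgauss _ _ _ _ (gaussParam_of_mem_PR hμ₁) (gaussParam_of_mem_PR hμ₂)
    _ ≤ C * ((1 + n * (1 + ‖mean μ₁‖ + ‖mean μ₂‖)) * dG gw μ₁ μ₂) := by
        gcongr
        exact norm_mean_sub_add_norm_cov_sub_le_dG (integrable_gw_of_mem_PR hR0.ne' hμ₁)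
          (integrable_gw_of_mem_PR hR0.ne' hμ₂)
    _ ≤ C * ((1 + n * (1 + R + R)) * dG gw μ₁ μ₂) := by
        gcongr
        exacts [(norm_le_enorm _).trans hμ₁.2.1, (norm_le_enorm _).trans hμ₂.2.1]
    _ ≤ (C * (1 + n * (1 + R + R)) + 1) * dG gw μ₁ μ₂ := by linarith

end EnKF
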